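/- If λ is a partition of n and k a positive integer, then s_λ · p_k = Σ_ν sgn(ν/λ) s_ν, where the sum is over partitions ν ⊇ λ such that the skew shape ν/λ is a k-ribbon (a connected skew shape of k cells containing no 2×2 square), and sgn(ν/λ) = (−1)^{r−1} where r is the number of rows occupied by ν/λ (Murnaghan–Nakayama rule). -/

import Mathlib

open Classical

/- Partitions are represented by their row-length functions `λ : ℕ → ℕ`
(row `i` has `λ i` cells, rows weakly decreasing, eventually `0`).  The cell
`(i, j)` lies in the skew shape `γ/ρ` iff `ρ i ≤ j < γ i`. -/

/-- Membership of the cell `c` in the skew shape `γ/ρ`. -/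
def cellMem (ρ γ : ℕ → ℕ) (c : ℕ × ℕ) : Prop := ρ c.1 ≤ c.2 ∧ c.2 < γ c.1

/-- `γ/ρ` is a `k`-ribbon: `ρ ⊆ γ` and the cells of `γ/ρ` can be labeled
`b 0, …, b (k-1)` so that each next cell is one unit to the left of, or one unit
below, the previous cell.  (Equivalently, `γ/ρ` is a connected skew shape of `k`
cells containing no 2×2 square.) -/
def IsRibbon (ρ γ : ℕ → ℕ) (k : ℕ) : Prop :=
  (∀ i, ρ i ≤ γ i) ∧
  ∃ b : Fin k → ℕ × ℕ,
    Function.Injective b ∧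
    (∀ m, cellMem ρ γ (b m)) ∧
    (∀ c, cellMem ρ γ c → ∃ m, b m = c) ∧
    ∀ (m : Fin k) (h : (m : ℕ) + 1 < k),
      ((b ⟨(m : ℕ) + 1, h⟩).1 = (b m).1 ∧ (b m).2 = (b ⟨(m : ℕ) + 1, h⟩).2 + 1) ∨
      ((b ⟨(m : ℕ) + 1, h⟩).2 = (b m).2 ∧ (b ⟨(m : ℕ) + 1, h⟩).1 = (b m).1 + 1)

/-- Semistandard Young tableau of shape `λ` with entries in `ℕ` (recorded as a
function on all cells, equal to `0` outside the diagram): rows weakly increase,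
columns strictly increase. -/
def IsSSYT (lam : ℕ → ℕ) (T : ℕ × ℕ → ℕ) : Prop :=
  (∀ i j, ¬ j < lam i → T (i, j) = 0) ∧
  (∀ i j, j + 1 < lam i → T (i, j) ≤ T (i, j + 1)) ∧
  (∀ i j, j < lam (i + 1) → T (i, j) < T (i + 1, j))

/-- The Schur function `s_λ`: the coefficient of the monomial `L` is the number of
semistandard Young tableaux of shape `λ` and content `L` (the entry `v` stands for
the variable `x_v`). -/
noncomputable def schurS (lam : ℕ → ℕ) : MvPowerSeries ℕ ℚ :=
  fun L => (Nat.card {T : ℕ × ℕ → ℕ // IsSSYT lam T ∧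
    ∀ v, Nat.card {c : ℕ × ℕ // c.2 < lam c.1 ∧ T c = v} = L v} : ℚ)

/-- The power-sum symmetric function `p_k = Σ_i x_i^k`. -/
noncomputable def pS (k : ℕ) : MvPowerSeries ℕ ℚ :=
  fun d => if ∃ j, d = Finsupp.single j k then 1 else 0

namespace MN

/-- The 0/1 matrix of comparisons `b j ≤ a i`. -/
noncomputable def cmpM {N : ℕ} (a b : Fin N → ℕ) : Matrix (Fin N) (Fin N) ℚ :=
  Matrix.of fun i j => if b j ≤ a i then 1 else 0

noncomputable def cmpF {N : ℕ} (a b : Fin N → ℕ) : ℚ := (cmpM a b).det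

def ssum (N : ℕ) (L : ℕ → ℕ) (n : ℕ) : ℕ :=
  (∑ i : Fin N, (N - 1 - (i : ℕ))) + ∑ v ∈ Finset.range n, L v

noncomputable def Kt (N : ℕ) : ℕ → (ℕ → ℕ) → (Fin N → ℕ) → ℚ
  | 0, _, a => (Matrix.of fun i j : Fin N => if a i = N - 1 - (j : ℕ) then (1 : ℚ) else 0).det
  | n + 1, L, a => if ∑ i, a i = ssum N L (n + 1) then
      (N.factorial : ℚ)⁻¹ * ∑ b ∈ Finset.piAntidiag Finset.univ (ssum N L n),
        cmpF a b * Kt N n L b else 0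

theorem row_col_swap {N : ℕ} (M P : Matrix (Fin N) (Fin N) ℚ) :
    ∑ i, (M.updateRow i (P i)).det = ∑ j, (M.updateCol j (fun i => P i j)).det := by
  simp_rw [← Matrix.cramer_transpose_apply, ← Matrix.cramer_apply,
    Matrix.cramer_eq_adjugate_mulVec, ← Matrix.adjugate_transpose, Matrix.mulVec, dotProduct,
    Matrix.transpose_apply]
  rw [Finset.sum_comm]

theorem cmpF_perm_left {N : ℕ} (a b : Fin N → ℕ) (σ : Equiv.Perm (Fin N)) :
    cmpF (a ∘ σ) b = (Equiv.Perm.sign σ : ℤ) * cmpF a b := by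
  unfold cmpF
  rw [← Matrix.det_permute]
  rfl

theorem cmpF_perm_right {N : ℕ} (a b : Fin N → ℕ) (σ : Equiv.Perm (Fin N)) :
    cmpF a (b ∘ σ) = (Equiv.Perm.sign σ : ℤ) * cmpF a b := by
  unfold cmpF
  rw [← Matrix.det_permute']
  rfl

theorem cmpF_eq_left {N : ℕ} (a b : Fin N → ℕ) (i j : Fin N) (h : i ≠ j) (hij : a i = a j) :
    cmpF a b = 0 :=
  Matrix.det_zero_of_row_eq h (by ext c; simp [cmpM, hij])

theorem cmpF_sum {N : ℕ} (a b : Fin N → ℕ) (h : cmpF a b ≠ 0) : ∑ i, b i ≤ ∑ i, a i := by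
  unfold cmpF at h
  rw [Matrix.det_apply] at h
  obtain ⟨σ, -, hσ⟩ := Finset.exists_ne_zero_of_sum_ne_zero h
  have h1 : ∏ i, cmpM a b (σ i) i ≠ 0 := by
    intro h0; exact hσ (by rw [h0, smul_zero])
  rw [Finset.prod_ne_zero_iff] at h1
  calc ∑ i, b i ≤ ∑ i, a (σ i) := by
        apply Finset.sum_le_sum
        intro i _
        have := h1 i (Finset.mem_univ _)
        by_contra hc
        exact this (by simp [cmpM, hc])
    _ = ∑ i, a i := Equiv.sum_comp σ a

theorem Kt_perm (N n : ℕ) (L : ℕ → ℕ) (a : Fin N → ℕ) (σ : Equiv.Perm (Fin N)) :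
    Kt N n L (a ∘ σ) = (Equiv.Perm.sign σ : ℤ) * Kt N n L a := by
  cases n with
  | zero =>
    unfold Kt
    rw [← Matrix.det_permute]
    rfl
  | succ n =>
    unfold Kt
    have : ∑ i, (a ∘ σ) i = ∑ i, a i := Equiv.sum_comp σ a
    rw [this]
    split_ifs
    · simp_rw [cmpF_perm_left, mul_assoc, ← Finset.mul_sum]
      ring
    · simp

theorem Kt_eq (N n : ℕ) (L : ℕ → ℕ) (a : Fin N → ℕ) (i j : Fin N) (h : i ≠ j) (hij : a i = a j) :
    Kt N n L a = 0 := by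
  cases n with
  | zero => exact Matrix.det_zero_of_row_eq h (by ext c; simp [hij])
  | succ n =>
    unfold Kt
    simp [cmpF_eq_left a _ i j h hij]

theorem Kt_sum (N n : ℕ) (L : ℕ → ℕ) (a : Fin N → ℕ) (h : Kt N n L a ≠ 0) :
    ∑ i, a i = ssum N L n := by
  cases n with
  | zero =>
    unfold Kt at h
    rw [Matrix.det_apply] at h
    obtain ⟨σ, -, hσ⟩ := Finset.exists_ne_zero_of_sum_ne_zero h
    have h1 : ∏ i, (Matrix.of fun i j : Fin N => if a i = N - 1 - (j : ℕ) then (1 : ℚ) else 0) (σ i) i ≠ 0 := by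
      intro h0; exact hσ (by rw [h0, smul_zero])
    rw [Finset.prod_ne_zero_iff] at h1
    rw [← Equiv.sum_comp σ a]
    simp only [ssum, Finset.range_zero, Finset.sum_empty, add_zero]
    apply Finset.sum_congr rfl
    intro i _
    have := h1 i (Finset.mem_univ _)
    by_contra hc
    exact this (by simp [hc])
  | succ n =>
    unfold Kt at h
    by_contra hc
    simp [hc] at h

theorem ssum_congr (N n : ℕ) (L L' : ℕ → ℕ) (h : ∀ v < n, L v = L' v) :
    ssum N L n = ssum N L' n := by
  unfold ssum
  congr 1
  exact Finset.sum_congr rfl (fun v hv => h v (Finset.mem_range.1 hv))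

theorem Kt_congr (N n : ℕ) (L L' : ℕ → ℕ) (h : ∀ v < n, L v = L' v) (a : Fin N → ℕ) :
    Kt N n L a = Kt N n L' a := by
  induction n generalizing a with
  | zero => rfl
  | succ n ih =>
    unfold Kt
    rw [ssum_congr N _ L L' h, ssum_congr N n L L' (fun v hv => h v (by omega))]
    simp_rw [ih (fun v hv => h v (by omega))]

theorem ssum_sub (N n k : ℕ) (L : ℕ → ℕ) (j : ℕ) (hj : j < n) (hk : k ≤ L j) :
    ssum N (L - Pi.single j k) n + k = ssum N L n := by
  unfold ssum
  have : ∑ v ∈ Finset.range n, L v = ∑ v ∈ Finset.range n, ((L - Pi.single j k : ℕ → ℕ) v + (Pi.single j k : ℕ → ℕ) v) := by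
    apply Finset.sum_congr rfl
    intro v _
    by_cases hv : v = j
    · subst hv; simp; omega
    · simp [hv]
  rw [this, Finset.sum_add_distrib, Finset.sum_pi_single']
  simp [hj]
  omega

theorem sum_range_le (s : Finset ℕ) (n : ℕ) (hs : s.card = n) :
    ∑ i ∈ Finset.range n, i ≤ ∑ i ∈ s, i := by
  induction n generalizing s with
  | zero => simp
  | succ n ih =>
    have hne : s.Nonempty := by rw [← Finset.card_pos]; omega
    have hm := s.max'_mem hne
    have h1 : s ⊆ Finset.range (s.max' hne + 1) := by
      intro x hx
      have := s.le_max' x hx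
      simp; omega
    have h2 := Finset.card_le_card h1
    rw [Finset.card_range] at h2
    have h3 := ih (s.erase (s.max' hne)) (by rw [Finset.card_erase_of_mem hm]; omega)
    rw [Finset.sum_range_succ, ← Finset.sum_erase_add s _ hm]
    omega

/-- An injective vector with sum not too large contains a zero. -/
theorem exists_zero {N : ℕ} (a : Fin N → ℕ) (ha : Function.Injective a) (m : ℕ) (hm : m < N)
    (hs : ∑ i, a i = (∑ i : Fin N, (N - 1 - (i : ℕ))) + m) : ∃ i, a i = 0 := by
  by_contra hc
  push Not at hc
  have h1 : ∑ i : Fin N, (N - 1 - (i : ℕ)) = ∑ i ∈ Finset.range N, i := by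
    rw [Fin.sum_univ_eq_sum_range (fun i => N - 1 - i)]
    exact Finset.sum_range_reflect (fun i => i) N
  have h2 : ∑ i ∈ Finset.range N, i ≤ ∑ i : Fin N, (a i - 1) := by
    have inj : Function.Injective (fun i => a i - 1) := by
      intro i j hij
      apply ha
      have := hc i
      have := hc j
      simp only at hij
      omega
    have h3 := sum_range_le (Finset.univ.image (fun i => a i - 1)) N
      (by rw [Finset.card_image_of_injective _ inj]; simp)
    rwa [Finset.sum_image (fun x _ y _ h => inj h)] at h3
  have h3 : ∑ i : Fin N, a i = ∑ i : Fin N, (a i - 1) + N := by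
    have : ∑ i : Fin N, a i = ∑ i : Fin N, ((a i - 1) + 1) :=
      Finset.sum_congr rfl (fun i _ => by have := hc i; omega)
    rw [this, Finset.sum_add_distrib]
    simp
  omega

theorem sum_cmpF {N : ℕ} (a b : Fin N → ℕ) (k : ℕ) :
    ∑ i, cmpF (a + Pi.single i k) b =
      ∑ j, ((cmpM a b).updateCol j (fun i => if b j ≤ a i + k then 1 else 0)).det := by
  rw [← row_col_swap (cmpM a b) (fun i j => if b j ≤ a i + k then 1 else 0)]
  apply Finset.sum_congr rfl
  intro i _
  unfold cmpF
  congr 1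
  ext r c
  by_cases hr : r = i
  · subst hr; simp [cmpM]
  · simp [cmpM, hr]

theorem col_shift {N : ℕ} (a b : Fin N → ℕ) (k : ℕ) (j : Fin N) :
    ((cmpM a (b + Pi.single j k)).updateCol j
      (fun i => if (b + Pi.single j k : Fin N → ℕ) j ≤ a i + k then 1 else 0)).det = cmpF a b := by
  unfold cmpF
  congr 1
  ext r c
  by_cases hc : c = j
  · subst hc; simp [cmpM]
  · simp [cmpM, hc]

theorem col_low {N : ℕ} (a b : Fin N → ℕ) (k : ℕ) (j i0 : Fin N) (h0 : b i0 = 0) (hj : b j < k) :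
    ((cmpM a b).updateCol j (fun i => if b j ≤ a i + k then 1 else 0)).det
      = if j = i0 then cmpF a b else 0 := by
  split_ifs with h
  · subst h
    unfold cmpF
    congr 1
    ext r c
    by_cases hc : c = j
    · subst hc; simp [cmpM, h0]
    · simp [hc]
  · apply Matrix.det_zero_of_column_eq h
    intro r
    have : b j ≤ a r + k := by omega
    have h' : i0 ≠ j := fun e => h e.symm
    simp [h', this, cmpM, h0]

theorem Kt_zero_shift (N k : ℕ) (hk : 0 < k) (L : ℕ → ℕ) (a : Fin N → ℕ) :
    ∑ i, Kt N 0 L (a + Pi.single i k) = 0 := by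
  have h1 : ∑ i, Kt N 0 L (a + Pi.single i k) = ∑ j : Fin N,
      ((Matrix.of fun i j : Fin N => if a i = N - 1 - (j : ℕ) then (1 : ℚ) else 0).updateCol j
        (fun i => if a i + k = N - 1 - (j : ℕ) then 1 else 0)).det := by
    rw [← row_col_swap _ (fun i j => if a i + k = N - 1 - (j : ℕ) then 1 else 0)]
    apply Finset.sum_congr rfl
    intro i _
    unfold Kt
    congr 1
    ext r c
    by_cases hr : r = i
    · subst hr; simp
    · simp [hr]
  rw [h1]
  apply Finset.sum_eq_zero
  intro j _
  by_cases h : (j : ℕ) + k < N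
  · have hne : j ≠ (⟨j + k, h⟩ : Fin N) := by
      intro e; have := congrArg Fin.val e; simp at this; omega
    apply Matrix.det_zero_of_column_eq hne
    intro r
    have : (a r + k = N - 1 - (j : ℕ)) ↔ (a r = N - 1 - ((j : ℕ) + k)) := by omega
    simp [hne.symm, this]
  · apply Matrix.det_eq_zero_of_column_eq_zero j
    intro r
    have : ¬ (a r + k = N - 1 - (j : ℕ)) := by omega
    simp [this]

theorem Kt_main (N k : ℕ) (hk : 0 < k) (n : ℕ) (L : ℕ → ℕ) (a : Fin N → ℕ)
    (hN : ∑ v ∈ Finset.range n, L v < N) :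
    ∑ i, Kt N n L (a + Pi.single i k)
      = ∑ j ∈ Finset.range n, if k ≤ L j then Kt N n (L - Pi.single j k) a else 0 := by
  induction n generalizing L a with
  | zero => rw [Kt_zero_shift N k hk]; simp
  | succ n ih =>
    have hN' : ∑ v ∈ Finset.range n, L v < N := by
      rw [Finset.sum_range_succ] at hN; omega
    have hsh : ∀ i : Fin N, ∑ r, (a + Pi.single i k : Fin N → ℕ) r = ∑ r, a r + k := by
      intro i
      simp [Finset.sum_add_distrib]
    by_cases hs : ∑ r, a r + k = ssum N L (n + 1)
    swap
    · rw [Finset.sum_eq_zero, Finset.sum_eq_zero]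
      · intro j hj
        split_ifs with hkj
        · by_contra hne
          have := Kt_sum _ _ _ _ hne
          have h2 := ssum_sub N (n + 1) k L j (Finset.mem_range.1 hj) hkj
          omega
        · rfl
      · intro i _
        by_contra hne
        have := Kt_sum _ _ _ _ hne
        rw [hsh] at this
        omega
    have hfac : (N.factorial : ℚ) ≠ 0 := by exact_mod_cast N.factorial_ne_zero
    -- left side
    have hL : ∑ i, Kt N (n + 1) L (a + Pi.single i k) = (N.factorial : ℚ)⁻¹ *
        ∑ b ∈ Finset.piAntidiag Finset.univ (ssum N L n), Kt N n L b *
          ∑ j, ((cmpM a b).updateCol j (fun i => if b j ≤ a i + k then 1 else 0)).det := by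
      simp_rw [← sum_cmpF]
      simp only [Kt, hsh, hs, if_true]
      rw [← Finset.mul_sum, Finset.sum_comm]
      congr 1
      apply Finset.sum_congr rfl
      intro b _
      rw [Finset.mul_sum]
      exact Finset.sum_congr rfl (fun i _ => mul_comm _ _)
    -- splitting
    have hsplit : ∑ b ∈ Finset.piAntidiag Finset.univ (ssum N L n), Kt N n L b *
          ∑ j, ((cmpM a b).updateCol j (fun i => if b j ≤ a i + k then 1 else 0)).det
        = (∑ j : Fin N, ∑ b ∈ (Finset.piAntidiag Finset.univ (ssum N L n)).filter (fun b => k ≤ b j),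
            Kt N n L b * ((cmpM a b).updateCol j (fun i => if b j ≤ a i + k then 1 else 0)).det)
          + ∑ b ∈ Finset.piAntidiag Finset.univ (ssum N L n), cmpF a b * Kt N n L b := by
      simp_rw [Finset.sum_filter]
      rw [Finset.sum_comm, ← Finset.sum_add_distrib]
      apply Finset.sum_congr rfl
      intro b hb
      by_cases hK : Kt N n L b = 0
      · simp [hK]
      have hinj : Function.Injective b := by
        intro i j hij
        by_contra hne
        exact hK (Kt_eq N n L b i j hne hij)
      obtain ⟨i0, hi0⟩ := exists_zero b hinj _ hN' (Kt_sum _ _ _ _ hK)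
      have : cmpF a b * Kt N n L b = ∑ j, if j = i0 then cmpF a b * Kt N n L b else 0 := by simp
      rw [this, Finset.mul_sum, ← Finset.sum_add_distrib]
      apply Finset.sum_congr rfl
      intro j _
      by_cases hj : k ≤ b j
      · have : j ≠ i0 := by rintro rfl; omega
        simp [hj, this]
      · rw [col_low a b k j i0 hi0 (by omega)]
        simp only [hj, if_false, zero_add]
        split_ifs
        · ring
        · ring
    have hfirst : (∑ j : Fin N, ∑ b ∈ (Finset.piAntidiag Finset.univ (ssum N L n)).filter (fun b => k ≤ b j),
            Kt N n L b * ((cmpM a b).updateCol j (fun i => if b j ≤ a i + k then 1 else 0)).det)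
        = N.factorial * ∑ j ∈ Finset.range n, if k ≤ L j then Kt N (n + 1) (L - Pi.single j k) a else 0 := by
      by_cases hsk : k ≤ ssum N L n
      · have h1 : ∀ j : Fin N, ∑ b ∈ (Finset.piAntidiag Finset.univ (ssum N L n)).filter (fun b => k ≤ b j),
            Kt N n L b * ((cmpM a b).updateCol j (fun i => if b j ≤ a i + k then 1 else 0)).det
            = ∑ b ∈ Finset.piAntidiag Finset.univ (ssum N L n - k),
              Kt N n L (b + Pi.single j k) * cmpF a b := by
          intro j
          symm
          apply Finset.sum_bij (fun b _ => b + Pi.single j k)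
          · intro b hb
            simp only [Finset.mem_piAntidiag, Finset.mem_filter] at hb ⊢
            refine ⟨⟨?_, by simp⟩, by simp⟩
            simp only [Pi.add_apply, Finset.sum_add_distrib]
            rw [hb.1]
            simp
            omega
          · intro b _ c _ h
            exact add_right_cancel h
          · intro b hb
            simp only [Finset.mem_piAntidiag, Finset.mem_filter] at hb
            have hbb : b - Pi.single j k + Pi.single j k = b := by
              ext r
              by_cases hr : r = j
              · subst hr; simp; omega
              · simp [hr]
            refine ⟨b - Pi.single j k, ?_, hbb⟩
            simp only [Finset.mem_piAntidiag]
            refine ⟨?_, by simp⟩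
            have h2 := hb.1.1
            rw [← hbb] at h2
            simp only [Pi.add_apply, Finset.sum_add_distrib] at h2
            simp at h2 ⊢
            omega
          · intro b _
            rw [col_shift]
        simp_rw [h1]
        rw [Finset.sum_comm]
        simp_rw [← Finset.sum_mul, ih L _ hN', Finset.sum_mul]
        rw [Finset.sum_comm, Finset.mul_sum]
        apply Finset.sum_congr rfl
        intro j hj
        have hj := Finset.mem_range.1 hj
        split_ifs with hkj
        · have e1 := ssum_sub N n k L j hj hkj
          have e2 := ssum_sub N (n+1) k L j (by omega) hkj
          have e3 : ssum N L n - k = ssum N (L - Pi.single j k) n := by omega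
          have e4 : ∑ r, a r = ssum N (L - Pi.single j k) (n + 1) := by omega
          rw [e3]
          conv_rhs => unfold Kt
          rw [if_pos e4, mul_inv_cancel_left₀ hfac]
          exact Finset.sum_congr rfl (fun b _ => mul_comm _ _)
        · simp
      · rw [Finset.sum_eq_zero, Finset.sum_eq_zero, mul_zero]
        · intro j hj
          rw [if_neg]
          intro hkj
          have := ssum_sub N n k L j (Finset.mem_range.1 hj) hkj
          omega
        · intro j _
          apply Finset.sum_eq_zero
          intro b hb
          simp only [Finset.mem_piAntidiag, Finset.mem_filter] at hb
          have := Finset.single_le_sum (f := b) (fun i _ => Nat.zero_le _) (Finset.mem_univ j)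
          have : ∑ r, b r = _ := hb.1.1
          omega
    have hsecond : ∑ b ∈ Finset.piAntidiag Finset.univ (ssum N L n), cmpF a b * Kt N n L b
        = N.factorial * if k ≤ L n then Kt N (n + 1) (L - Pi.single n k) a else 0 := by
      have hssn : ssum N L (n + 1) = ssum N L n + L n := by
        unfold ssum; rw [Finset.sum_range_succ]; ring
      split_ifs with hkn
      · have e2 := ssum_sub N (n+1) k L n (by omega) hkn
        have hc : ∀ v < n, (L - Pi.single n k : ℕ → ℕ) v = L v := by
          intro v hv
          have : v ≠ n := by omega
          simp [this]
        have e4 : ∑ r, a r = ssum N (L - Pi.single n k) (n + 1) := by omega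
        conv_rhs => unfold Kt
        rw [if_pos e4, mul_inv_cancel_left₀ hfac, ssum_congr N n _ _ hc]
        exact Finset.sum_congr rfl (fun b _ => by rw [Kt_congr N n _ _ hc])
      · rw [mul_zero]
        apply Finset.sum_eq_zero
        intro b hb
        simp only [Finset.mem_piAntidiag] at hb
        by_contra hne
        have := cmpF_sum a b (left_ne_zero_of_mul hne)
        have : ∑ r, b r = _ := hb.1
        omega
    rw [hL, hsplit, hfirst, hsecond, Finset.sum_range_succ]
    field_simp

end MN

namespace MN

def IsPart (N : ℕ) (μ : ℕ → ℕ) : Prop := (∀ i, μ (i + 1) ≤ μ i) ∧ ∀ i, N ≤ i → μ i = 0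

def beta (N : ℕ) (μ : ℕ → ℕ) : Fin N → ℕ := fun i => μ i + (N - 1 - i)

def unbeta (N : ℕ) (b : Fin N → ℕ) : ℕ → ℕ :=
  fun i => if h : i < N then b ⟨i, h⟩ - (N - 1 - i) else 0

def HS (lam μ : ℕ → ℕ) : Prop := ∀ i, μ i ≤ lam i ∧ lam (i + 1) ≤ μ i

theorem IsPart.anti {N : ℕ} {μ : ℕ → ℕ} (h : IsPart N μ) : Antitone μ := antitone_nat_of_succ_le h.1

theorem beta_anti {N : ℕ} {μ : ℕ → ℕ} (h : IsPart N μ) : StrictAnti (beta N μ) := by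
  intro i j hij
  have := h.anti (show (i : ℕ) ≤ j from le_of_lt hij)
  have h2 : (i : ℕ) < j := hij
  have := j.2
  simp only [beta]
  omega

theorem unbeta_beta {N : ℕ} {μ : ℕ → ℕ} (h : IsPart N μ) : unbeta N (beta N μ) = μ := by
  ext i
  unfold unbeta beta
  split_ifs with hi
  · simp
  · exact (h.2 i (by omega)).symm

theorem anti_lower {N : ℕ} {b : Fin N → ℕ} (h : StrictAnti b) (i : Fin N) : N - 1 - i ≤ b i := by
  have key : ∀ d (i : Fin N), N - 1 - i = d → d ≤ b i := by
    intro d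
    induction d with
    | zero => intro i _; exact Nat.zero_le _
    | succ d ih =>
      intro i hi
      have hlt : (i : ℕ) + 1 < N := by omega
      have h1 := ih ⟨i + 1, hlt⟩ (by simp only; omega)
      have h2 : b ⟨i + 1, hlt⟩ < b i := h (by simp [Fin.lt_def])
      omega
  exact key _ i rfl

theorem beta_unbeta {N : ℕ} {b : Fin N → ℕ} (h : StrictAnti b) : beta N (unbeta N b) = b := by
  ext i
  have := anti_lower h i
  simp [beta, unbeta]
  omega

theorem unbeta_part {N : ℕ} {b : Fin N → ℕ} (h : StrictAnti b) : IsPart N (unbeta N b) := by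
  constructor
  · intro i
    unfold unbeta
    by_cases h1 : i + 1 < N
    · have h0 : i < N := by omega
      have := anti_lower h ⟨i + 1, h1⟩
      have h2 : b ⟨i + 1, h1⟩ < b ⟨i, h0⟩ := h (by simp [Fin.lt_def])
      simp [h0, h1]
      omega
    · simp [h1]
  · intro i hi
    unfold unbeta
    simp; omega

theorem cmpF_one {N : ℕ} (a b : Fin N → ℕ)
    (h1 : ∀ i, b i ≤ a i) (h2 : ∀ i j, i < j → a j < b i) : cmpF a b = 1 := by
  unfold cmpF
  rw [Matrix.det_of_isUpperTriangular]
  · apply Finset.prod_eq_one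
    intro i _
    simp [cmpM, h1 i]
  · intro i j hij
    have : ¬ b j ≤ a i := by have := h2 j i hij; omega
    simp [cmpM, this]

theorem cmpF_ne {N : ℕ} (a b : Fin N → ℕ) (ha : StrictAnti a) (hb : StrictAnti b)
    (h : cmpF a b ≠ 0) : ∀ i, ∀ hi : i < N, b ⟨i, hi⟩ ≤ a ⟨i, hi⟩ ∧
      ∀ hi' : i + 1 < N, a ⟨i + 1, hi'⟩ < b ⟨i, hi⟩ := by
  have ha' := ha.antitone
  have hb' := hb.antitone
  intro i
  induction i with
  | zero =>
    intro hi
    have h0 : b ⟨0, hi⟩ ≤ a ⟨0, hi⟩ := by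
      by_contra hc
      apply h
      apply Matrix.det_eq_zero_of_column_eq_zero ⟨0, hi⟩
      intro r
      have : a r ≤ a ⟨0, hi⟩ := ha' (by simp [Fin.le_def])
      have : ¬ b ⟨0, hi⟩ ≤ a r := by omega
      simp [cmpM, this]
    refine ⟨h0, ?_⟩
    intro hi'
    by_contra hc
    apply h
    apply Matrix.det_zero_of_row_eq (i := ⟨0, hi⟩) (j := ⟨0 + 1, hi'⟩) (by simp)
    ext c
    have : b c ≤ b ⟨0, hi⟩ := hb' (by simp [Fin.le_def])
    have h3 : b c ≤ a ⟨0, hi⟩ := by omega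
    have h4 : b c ≤ a ⟨0 + 1, hi'⟩ := by omega
    simp only [cmpM, Matrix.of_apply, h3, h4]
  | succ i ih =>
    intro hi
    obtain ⟨p1, p2⟩ := ih (by omega)
    have p2 := p2 hi
    have h0 : b ⟨i + 1, hi⟩ ≤ a ⟨i + 1, hi⟩ := by
      by_contra hc
      apply h
      have hi0 : i < N := by omega
      apply Matrix.det_zero_of_column_eq (i := ⟨i, hi0⟩) (j := ⟨i + 1, hi⟩) (by simp)
      intro r
      by_cases hr : (r : ℕ) ≤ i
      · have : a ⟨i, by omega⟩ ≤ a r := ha' (by simpa [Fin.le_def] using hr)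
        have q : b ⟨i + 1, hi⟩ ≤ b ⟨i, by omega⟩ := hb' (by simp [Fin.le_def])
        have h3 : b ⟨i, by omega⟩ ≤ a r := by omega
        have h4 : b ⟨i + 1, hi⟩ ≤ a r := by omega
        simp only [cmpM, Matrix.of_apply, h3, h4]
      · have : a r ≤ a ⟨i + 1, hi⟩ := ha' (by simp [Fin.le_def]; omega)
        have h3 : ¬ b ⟨i, by omega⟩ ≤ a r := by omega
        have h4 : ¬ b ⟨i + 1, hi⟩ ≤ a r := by omega
        simp only [cmpM, Matrix.of_apply, h3, h4]
    refine ⟨h0, ?_⟩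
    intro hi'
    by_contra hc
    apply h
    apply Matrix.det_zero_of_row_eq (i := ⟨i + 1, hi⟩) (j := ⟨i + 1 + 1, hi'⟩) (by simp)
    ext c
    by_cases hr : (c : ℕ) ≤ i
    · have : b ⟨i, by omega⟩ ≤ b c := hb' (by simpa [Fin.le_def] using hr)
      have : a ⟨i + 1 + 1, hi'⟩ ≤ a ⟨i + 1, hi⟩ := ha' (by simp [Fin.le_def])
      have h3 : ¬ b c ≤ a ⟨i + 1, hi⟩ := by omega
      have h4 : ¬ b c ≤ a ⟨i + 1 + 1, hi'⟩ := by omega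
      simp only [cmpM, Matrix.of_apply, h3, h4]
    · have : b c ≤ b ⟨i + 1, hi⟩ := hb' (by simp [Fin.le_def]; omega)
      have h3 : b c ≤ a ⟨i + 1, hi⟩ := by omega
      have h4 : b c ≤ a ⟨i + 1 + 1, hi'⟩ := by omega
      simp only [cmpM, Matrix.of_apply, h3, h4]

theorem cmpF_beta {N : ℕ} {lam μ : ℕ → ℕ} (hl : IsPart N lam) (hm : IsPart N μ) :
    cmpF (beta N lam) (beta N μ) = if HS lam μ then 1 else 0 := by
  split_ifs with h
  · apply cmpF_one _ _
    · intro i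
      have := (h i).1
      simp only [beta]; omega
    · intro i j hij
      have h2 : (i : ℕ) < j := hij
      have := (h i).2
      have := hl.anti (show (i : ℕ) + 1 ≤ j from hij)
      have := j.2
      simp only [beta]; omega
  · by_contra hc
    apply h
    have := cmpF_ne _ _ (beta_anti hl) (beta_anti hm) hc
    intro i
    by_cases hi : i < N
    · obtain ⟨h1, h2⟩ := this i hi
      simp only [beta] at h1 h2
      refine ⟨by omega, ?_⟩
      by_cases hi' : i + 1 < N
      · have := h2 hi'
        omega
      · rw [hl.2 _ (by omega)]; omega
    · rw [hm.2 i (by omega), hl.2 (i+1) (by omega)]; omega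

theorem desym {N : ℕ} (s : ℕ) (g : (Fin N → ℕ) → ℚ)
    (hsym : ∀ b (σ : Equiv.Perm (Fin N)), g (b ∘ σ) = g b)
    (hinj : ∀ b, ¬ Function.Injective b → g b = 0) :
    ∑ b ∈ Finset.piAntidiag Finset.univ s, g b
      = N.factorial * ∑ b ∈ (Finset.piAntidiag Finset.univ s).filter (fun b => StrictAnti b), g b := by
  have h1 : ∀ b : Fin N → ℕ, g b = ∑ σ : Equiv.Perm (Fin N), if StrictAnti (b ∘ σ) then g (b ∘ σ) else 0 := by
    intro b
    by_cases hb : Function.Injective b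
    · let σ := Tuple.sort (OrderDual.toDual ∘ b)
      have hσ : StrictAnti (b ∘ σ) := by
        have hm : Monotone ((OrderDual.toDual ∘ b) ∘ σ) := Tuple.monotone_sort _
        have : Antitone (b ∘ σ) := fun i j hij => hm hij
        exact this.strictAnti_of_injective (hb.comp σ.injective)
      rw [Finset.sum_eq_single σ]
      · simp [hσ, hsym]
      · intro τ _ hτ
        rw [if_neg]
        intro hs
        apply hτ
        have e : (OrderDual.toDual ∘ b) ∘ τ = (OrderDual.toDual ∘ b) ∘ σ :=
          Tuple.unique_monotone (fun i j hij => hs.antitone hij) (fun i j hij => hσ.antitone hij)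
        ext i
        have := congrFun e i
        exact congrArg Fin.val (hb this)
      · simp
    · rw [hinj b hb, Finset.sum_eq_zero]
      intro σ _
      rw [hsym, hinj b hb]; simp
  rw [Finset.sum_congr rfl (fun b _ => h1 b), Finset.sum_comm]
  have h2 : ∀ σ : Equiv.Perm (Fin N), ∑ b ∈ Finset.piAntidiag Finset.univ s,
      (if StrictAnti (b ∘ σ) then g (b ∘ σ) else 0)
      = ∑ b ∈ (Finset.piAntidiag Finset.univ s).filter (fun b => StrictAnti b), g b := by
    intro σ
    rw [Finset.sum_filter]
    apply Finset.sum_bij' (fun b _ => b ∘ σ) (fun b _ => b ∘ σ.symm)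
    · intro b hb
      simp only [Finset.mem_piAntidiag] at hb ⊢
      exact ⟨by rw [← hb.1]; exact Equiv.sum_comp σ b, by simp⟩
    · intro b hb
      simp only [Finset.mem_piAntidiag] at hb ⊢
      exact ⟨by rw [← hb.1]; exact Equiv.sum_comp σ.symm b, by simp⟩
    · intro b _; ext; simp
    · intro b _; ext; simp
    · intro b _; rfl
  rw [Finset.sum_congr rfl (fun σ _ => h2 σ)]
  simp [Fintype.card_perm]

/-- cells of a diagram -/
def D (N : ℕ) (lam : ℕ → ℕ) : Finset (ℕ × ℕ) :=
  ((Finset.range N).sigma fun i => Finset.range (lam i)).map (Equiv.sigmaEquivProd ℕ ℕ).toEmbedding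

theorem card_D (N : ℕ) (lam : ℕ → ℕ) : (D N lam).card = ∑ i ∈ Finset.range N, lam i := by
  simp [D]

theorem mem_D {N : ℕ} {lam : ℕ → ℕ} (h : IsPart N lam) (c : ℕ × ℕ) : c ∈ D N lam ↔ c.2 < lam c.1 := by
  simp only [D, Finset.mem_map, Finset.mem_sigma, Finset.mem_range]
  constructor
  · rintro ⟨⟨i, j⟩, h, rfl⟩
    exact h.2
  · intro hc
    refine ⟨⟨c.1, c.2⟩, ⟨?_, hc⟩, rfl⟩
    change c.1 < N
    by_contra hn
    have := h.2 c.1 (by omega)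
    omega

def Kset (lam L : ℕ → ℕ) : Set (ℕ × ℕ → ℕ) := {T | IsSSYT lam T ∧
    ∀ v, Nat.card {c : ℕ × ℕ // c.2 < lam c.1 ∧ T c = v} = L v}

theorem card_cells {N : ℕ} {lam : ℕ → ℕ} (h : IsPart N lam) (T : ℕ × ℕ → ℕ) (v : ℕ) :
    Nat.card {c : ℕ × ℕ // c.2 < lam c.1 ∧ T c = v} = ((D N lam).filter (fun c => T c = v)).card := by
  apply Nat.subtype_card
  intro c
  simp [mem_D h]

theorem mem_Kset {N n : ℕ} {lam L : ℕ → ℕ} (h : IsPart N lam) (hL : ∀ v, n ≤ v → L v = 0)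
    (T : ℕ × ℕ → ℕ) : T ∈ Kset lam L ↔ IsSSYT lam T ∧ (∀ c, c.2 < lam c.1 → T c < n) ∧
      ∀ v < n, ((D N lam).filter (fun c => T c = v)).card = L v := by
  simp only [Kset, Set.mem_ofPred_eq, card_cells h]
  constructor
  · rintro ⟨h1, h2⟩
    refine ⟨h1, ?_, fun v _ => h2 v⟩
    intro c hc
    by_contra hn
    have h3 := h2 (T c)
    rw [hL _ (by omega), Finset.card_eq_zero] at h3
    have : c ∈ (D N lam).filter (fun c' => T c' = T c) := by simp [mem_D h, hc]
    rw [h3] at this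
    simp at this
  · rintro ⟨h1, h2, h3⟩
    refine ⟨h1, ?_⟩
    intro v
    by_cases hv : v < n
    · exact h3 v hv
    · rw [hL v (by omega), Finset.card_eq_zero, Finset.filter_eq_empty_iff]
      intro c hc
      have := h2 c ((mem_D h c).1 hc)
      omega

theorem card_below {N n : ℕ} {lam : ℕ → ℕ} (T : ℕ × ℕ → ℕ) (h : ∀ c ∈ D N lam, T c < n) :
    (D N lam).card = ∑ v ∈ Finset.range n, ((D N lam).filter (fun c => T c = v)).card :=
  Finset.card_eq_sum_card_fiberwise (fun c hc => by simpa using h c hc)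

theorem Kset_size {N n : ℕ} {lam L : ℕ → ℕ} (h : IsPart N lam) (hL : ∀ v, n ≤ v → L v = 0)
    (T : ℕ × ℕ → ℕ) (hT : T ∈ Kset lam L) :
    ∑ i ∈ Finset.range N, lam i = ∑ v ∈ Finset.range n, L v := by
  rw [mem_Kset h hL] at hT
  rw [← card_D, card_below T (n := n) (fun c hc => hT.2.1 c ((mem_D h c).1 hc))]
  exact Finset.sum_congr rfl (fun v hv => hT.2.2 v (Finset.mem_range.1 hv))

theorem Kset_finite {N n : ℕ} {lam L : ℕ → ℕ} (h : IsPart N lam) (hL : ∀ v, n ≤ v → L v = 0) :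
    (Kset lam L).Finite := by
  have : Function.Injective (fun (T : Kset lam L) (c : D N lam) =>
      (⟨T.1 c.1, ((mem_Kset h hL _).1 T.2).2.1 c.1 ((mem_D h c.1).1 c.2)⟩ : Fin n)) := by
    intro T T' hTT
    ext c
    by_cases hc : c.2 < lam c.1
    · have := congrFun hTT ⟨c, (mem_D h c).2 hc⟩
      simpa using this
    · rw [T.2.1.1 c.1 c.2 hc, T'.2.1.1 c.1 c.2 hc]
  exact Set.finite_coe_iff.1 (Finite.of_injective _ this)

theorem HS.part {N : ℕ} {lam μ : ℕ → ℕ} (h : IsPart N lam) (hs : HS lam μ) : IsPart N μ := by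
  constructor
  · intro i
    exact (hs (i+1)).1.trans (hs i).2
  · intro i hi
    have := (hs i).1
    rw [h.2 i hi] at this
    omega

theorem row_cut (t : ℕ → ℕ) (n l : ℕ) (h : ∀ j, j + 1 < l → t j ≤ t (j + 1)) :
    ∃ m ≤ l, ∀ j < l, (t j < n ↔ j < m) := by
  induction l with
  | zero => exact ⟨0, le_rfl, by simp⟩
  | succ l ih =>
    by_cases hl : t l < n
    · refine ⟨l + 1, le_rfl, ?_⟩
      intro j hj
      refine ⟨fun _ => hj, fun _ => ?_⟩
      have key : ∀ d, ∀ j, j + d = l → t j < n := by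
        intro d
        induction d with
        | zero => intro j hj; simp at hj; rwa [hj]
        | succ d ihd =>
          intro j hj
          exact lt_of_le_of_lt (h j (by omega)) (ihd (j + 1) (by omega))
      exact key (l - j) j (by omega)
    · obtain ⟨m, hm, hm'⟩ := ih (fun j hj => h j (by omega))
      refine ⟨m, by omega, ?_⟩
      intro j hj
      by_cases hjl : j = l
      · subst hjl
        constructor
        · intro; contradiction
        · intro; omega
      · exact hm' j (by omega)

/-- `T` has entries less than `n` exactly on `μ`. -/
def Cut (lam : ℕ → ℕ) (n : ℕ) (T : ℕ × ℕ → ℕ) (μ : ℕ → ℕ) : Prop :=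
  ∀ i j, j < lam i → (T (i, j) < n ↔ j < μ i)

theorem exists_cut {lam : ℕ → ℕ} (n : ℕ) (hl : ∀ i, lam (i + 1) ≤ lam i) {T : ℕ × ℕ → ℕ}
    (hT : IsSSYT lam T) (hn : ∀ c, c.2 < lam c.1 → T c < n + 1) : ∃ μ, HS lam μ ∧ Cut lam n T μ := by
  choose μ h1 h2 using fun i => row_cut (fun j => T (i, j)) n (lam i) (fun j hj => hT.2.1 i j hj)
  refine ⟨μ, ?_, h2⟩
  intro i
  refine ⟨h1 i, ?_⟩
  by_contra hc
  push Not at hc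
  have a1 := hT.2.2 i (μ i) hc
  have a2 := hn (i + 1, μ i) hc
  have a3 := (h2 i (μ i) (lt_of_lt_of_le hc (hl i))).1 (by omega)
  omega

theorem cut_unique {lam μ μ' : ℕ → ℕ} {n : ℕ} {T : ℕ × ℕ → ℕ} (h : HS lam μ) (h' : HS lam μ')
    (hc : Cut lam n T μ) (hc' : Cut lam n T μ') : μ = μ' := by
  ext i
  have a := (h i).1
  have b := (h' i).1
  rcases lt_trichotomy (μ i) (μ' i) with hlt | heq | hlt
  · have := (hc i (μ i) (by omega))
    have := (hc' i (μ i) (by omega))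
    omega
  · exact heq
  · have := (hc i (μ' i) (by omega))
    have := (hc' i (μ' i) (by omega))
    omega

theorem cut_filter {N n : ℕ} {lam μ : ℕ → ℕ} {T T' : ℕ × ℕ → ℕ} (h : IsPart N lam) (hs : HS lam μ)
    (hc : Cut lam n T μ) (hTT : ∀ c, c.2 < μ c.1 → T' c = T c) (v : ℕ) (hv : v < n) :
    (D N μ).filter (fun c => T' c = v) = (D N lam).filter (fun c => T c = v) := by
  ext c
  simp only [Finset.mem_filter, mem_D h, mem_D (hs.part h)]
  constructor
  · rintro ⟨h1, h2⟩
    rw [hTT c h1] at h2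
    exact ⟨lt_of_lt_of_le h1 (hs _).1, h2⟩
  · rintro ⟨h1, h2⟩
    have : c.2 < μ c.1 := (hc c.1 c.2 h1).1 (by rw [Prod.mk.eta, h2]; exact hv)
    exact ⟨this, by rw [hTT c this, h2]⟩

theorem fiber_card {N n : ℕ} {lam μ L : ℕ → ℕ} (h : IsPart N lam) (hs : HS lam μ)
    (hL : ∀ v, n + 1 ≤ v → L v = 0)
    (h1 : ∑ i ∈ Finset.range N, lam i = ∑ v ∈ Finset.range (n + 1), L v) :
    Nat.card {T // T ∈ Kset lam L ∧ Cut lam n T μ} = Nat.card (Kset μ (Function.update L n 0)) := by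
  have hm := hs.part h
  have hL' : ∀ v, n ≤ v → Function.update L n 0 v = 0 := by
    intro v hv
    by_cases hvn : v = n
    · simp [hvn]
    · simp only [Function.update_of_ne hvn]; exact hL v (by omega)
  apply Nat.card_congr
  refine ⟨fun T => ⟨fun c => if c.2 < μ c.1 then T.1 c else 0, ?_⟩,
    fun T => ⟨fun c => if c.2 < μ c.1 then T.1 c else if c.2 < lam c.1 then n else 0, ?_⟩, ?_, ?_⟩
  · obtain ⟨T, hT, hc⟩ := T
    rw [mem_Kset h hL] at hT
    rw [mem_Kset hm hL']
    refine ⟨⟨?_, ?_, ?_⟩, ?_, ?_⟩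
    · intro i j hj; simp [hj]
    · intro i j hj
      have : j < μ i := by omega
      have := hT.1.2.1 i j (lt_of_lt_of_le hj (hs i).1)
      simp_all
    · intro i j hj
      have : j < μ i := lt_of_lt_of_le hj (hm.1 i)
      have := hT.1.2.2 i j (lt_of_lt_of_le hj (hs _).1)
      simp_all
    · intro c hcc
      have := (hc c.1 c.2 (lt_of_lt_of_le hcc (hs _).1)).2 hcc
      simpa [hcc] using this
    · intro v hv
      rw [cut_filter h hs hc (by intro c hcc; simp [hcc]) v hv, hT.2.2 v (by omega),
        Function.update_of_ne (by omega)]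
  · obtain ⟨T, hT⟩ := T
    rw [mem_Kset hm hL'] at hT
    have hlt : ∀ i j, j < μ i → T (i, j) < n := fun i j hj => hT.2.1 (i, j) hj
    have hcut : Cut lam n (fun c => if c.2 < μ c.1 then T c else if c.2 < lam c.1 then n else 0) μ := by
      intro i j hj
      by_cases hjm : j < μ i
      · simp [hjm, hlt i j hjm]
      · simp [hjm, hj]
    have hle : ∀ c, c.2 < lam c.1 → (if c.2 < μ c.1 then T c else if c.2 < lam c.1 then n else 0) < n + 1 := by
      intro c hc
      split_ifs with hcm
      · have := hT.2.1 c hcm; omega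
      · omega
    refine ⟨?_, hcut⟩
    rw [mem_Kset h hL]
    have hcont : ∀ v < n, ((D N lam).filter (fun c => (if c.2 < μ c.1 then T c else if c.2 < lam c.1 then n else 0) = v)).card = L v := by
      intro v hv
      rw [← cut_filter (T' := T) h hs hcut (by intro c hcc; simp [hcc]) v hv, hT.2.2 v hv,
        Function.update_of_ne (by omega)]
    refine ⟨⟨?_, ?_, ?_⟩, hle, ?_⟩
    · intro i j hj
      have : ¬ j < μ i := by have := (hs i).1; omega
      simp [this, hj]
    · intro i j hj
      have hj' : j < lam i := by omega
      by_cases h2 : j + 1 < μ i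
      · have : j < μ i := by omega
        have := hT.1.2.1 i j h2
        simp_all
      · have := hle (i, j) hj'
        simp only [h2, hj, if_true, if_false] at this ⊢
        omega
    · intro i j hj
      have hji : j < μ i := lt_of_lt_of_le hj (hs i).2
      by_cases h2 : j < μ (i + 1)
      · have := hT.1.2.2 i j h2
        simp_all
      · simp [hji, h2, hj, hlt i j hji]
    · intro v hv
      by_cases hvn : v < n
      · exact hcont v hvn
      · have hvn : v = n := by omega
        subst hvn
        have e := card_below (n := v + 1) _ (fun c hc => hle c ((mem_D h c).1 hc))
        rw [card_D, h1, Finset.sum_range_succ, Finset.sum_range_succ,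
          Finset.sum_congr rfl (fun w hw => hcont w (Finset.mem_range.1 hw))] at e
        simp only
        change _ = (∑ w ∈ Finset.range v, L w) + _ at e
        omega
  · rintro ⟨T, hT, hc⟩
    rw [mem_Kset h hL] at hT
    ext c
    simp only
    by_cases h2 : c.2 < μ c.1
    · simp [h2]
    · by_cases h3 : c.2 < lam c.1
      · have := (hc c.1 c.2 h3)
        have := hT.2.1 c h3
        simp [h2, h3] at *
        omega
      · simp [h2, h3]
        exact (hT.1.1 c.1 c.2 h3).symm
  · rintro ⟨T, hT⟩
    ext c
    simp only
    by_cases h2 : c.2 < μ c.1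
    · simp [h2]
    · simp [h2]
      exact (hT.1.1 c.1 c.2 h2).symm

theorem sum_beta (N : ℕ) (μ : ℕ → ℕ) : ∑ i, beta N μ i
    = (∑ i : Fin N, (N - 1 - (i : ℕ))) + ∑ i ∈ Finset.range N, μ i := by
  simp only [beta, Finset.sum_add_distrib, Finset.sum_range]
  rw [add_comm]

theorem K_rec {N n : ℕ} {lam L : ℕ → ℕ} (h : IsPart N lam) 
    (hL : ∀ v, n + 1 ≤ v → L v = 0)
    (h1 : ∑ i ∈ Finset.range N, lam i = ∑ v ∈ Finset.range (n + 1), L v) :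
    (Nat.card (Kset lam L) : ℚ) = ∑ b ∈ (Finset.piAntidiag Finset.univ (ssum N L n)).filter (fun b => StrictAnti b),
      if HS lam (unbeta N b) then (Nat.card (Kset (unbeta N b) (Function.update L n 0)) : ℚ) else 0 := by
  have hfin := Kset_finite h hL
  have e1 : Nat.card (Kset lam L) = ∑ T ∈ hfin.toFinset, 1 := by
    rw [← Finset.card_eq_sum_ones, Nat.card_coe_set_eq, Set.ncard_eq_toFinset_card _ hfin]
  have e2 : ∀ T ∈ hfin.toFinset, (1 : ℕ) = ∑ b ∈ (Finset.piAntidiag Finset.univ (ssum N L n)).filter (fun b => StrictAnti b),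
      if HS lam (unbeta N b) ∧ Cut lam n T (unbeta N b) then 1 else 0 := by
    intro T hT
    rw [Set.Finite.mem_toFinset, mem_Kset h hL] at hT
    obtain ⟨μ, hs, hc⟩ := exists_cut n h.1 hT.1 hT.2.1
    have hm := hs.part h
    rw [Finset.sum_eq_single (beta N μ)]
    · rw [unbeta_beta hm]; simp [hs, hc]
    · intro b hb hne
      rw [if_neg]
      rintro ⟨hs', hc'⟩
      apply hne
      rw [cut_unique hs hs' hc hc', beta_unbeta (Finset.mem_filter.1 hb).2]
    · intro hn
      exfalso; apply hn
      simp only [Finset.mem_filter, Finset.mem_piAntidiag]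
      refine ⟨⟨?_, by simp⟩, beta_anti hm⟩
      change ∑ i, beta N μ i = _
      rw [sum_beta, ssum]
      congr 1
      rw [← card_D, card_below (n := n) T]
      · apply Finset.sum_congr rfl
        intro v hv
        have hv := Finset.mem_range.1 hv
        rw [cut_filter h hs hc (fun _ _ => rfl) v hv]
        exact hT.2.2 v (by omega)
      · intro c hcc
        have := (mem_D hm c).1 hcc
        exact (hc c.1 c.2 (lt_of_lt_of_le this (hs _).1)).2 this
  rw [e1, Finset.sum_congr rfl e2, Finset.sum_comm]
  push_cast
  apply Finset.sum_congr rfl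
  intro b hb
  by_cases hs : HS lam (unbeta N b)
  · simp only [hs, true_and, if_true]
    rw [← fiber_card h hs hL h1]
    rw [← Finset.sum_filter, Finset.sum_const, nsmul_eq_mul, mul_one]
    congr 1
    symm
    apply Nat.subtype_card
    intro T
    simp
  · simp [hs]

theorem Kt_eq_K {N : ℕ} (n : ℕ) (lam L : ℕ → ℕ) (h : IsPart N lam) (hL : ∀ v, n ≤ v → L v = 0) :
    Kt N n L (beta N lam) = (Nat.card (Kset lam L) : ℚ) := by
  by_cases hsz : ∑ i ∈ Finset.range N, lam i = ∑ v ∈ Finset.range n, L v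
  swap
  · have e1 : Kt N n L (beta N lam) = 0 := by
      by_contra hne
      have := Kt_sum _ _ _ _ hne
      rw [sum_beta, ssum] at this
      omega
    have e2 : Kset lam L = ∅ := by
      ext T
      simp only [Set.mem_empty_iff_false, iff_false]
      intro hT
      exact hsz (Kset_size h hL T hT)
    rw [e1, e2]; simp
  induction n generalizing lam L with
  | zero =>
    simp at hsz
    have hlam : ∀ i, lam i = 0 := by
      intro i
      by_cases hi : i < N
      · exact hsz i hi
      · exact h.2 i (by omega)
    have e1 : Kt N 0 L (beta N lam) = 1 := by
      unfold Kt
      refine Eq.trans ?_ (Matrix.det_one (n := Fin N))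
      congr 1
      ext i j
      rw [Matrix.one_apply]
      simp only [beta, hlam, Matrix.of_apply, Fin.ext_iff]
      congr 1
      have := i.2
      have := j.2
      simp; omega
    have e2 : Kset lam L = {fun _ => 0} := by
      ext T
      rw [mem_Kset h hL]
      simp only [Set.mem_singleton_iff]
      constructor
      · intro hT
        ext c
        exact hT.1.1 c.1 c.2 (by simp [hlam])
      · rintro rfl
        simp [IsSSYT, hlam]
    rw [e1, e2]; simp
  | succ n ih =>
    have hfac : (N.factorial : ℚ) ≠ 0 := by exact_mod_cast N.factorial_ne_zero
    rw [K_rec h hL hsz]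
    unfold Kt
    rw [if_pos (by rw [sum_beta, hsz]; rfl), desym, inv_mul_cancel_left₀ hfac]
    · apply Finset.sum_congr rfl
      intro b hb
      rw [Finset.mem_filter, Finset.mem_piAntidiag] at hb
      have hm := unbeta_part hb.2
      have e := cmpF_beta h hm
      rw [beta_unbeta hb.2] at e
      rw [e]
      split_ifs with hs
      · rw [one_mul]
        have hc : ∀ v < n, L v = Function.update L n 0 v := by
          intro v hv
          rw [Function.update_of_ne (by omega)]
        rw [Kt_congr N n L _ hc]
        have := ih (unbeta N b) (Function.update L n 0) hm ?_ ?_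
        · rwa [beta_unbeta hb.2] at this
        · intro v hv
          by_cases hvn : v = n
          · simp [hvn]
          · simp only [Function.update_of_ne hvn]; exact hL v (by omega)
        · have e3 : ∑ i, b i = _ := hb.1.1
          rw [← beta_unbeta hb.2, sum_beta, ssum] at e3
          rw [← Finset.sum_congr rfl (fun v hv => hc v (Finset.mem_range.1 hv))]
          change _ = ∑ v ∈ Finset.range n, L v
          omega
      · simp
    · intro b σ
      rw [cmpF_perm_right, Kt_perm]
      have : ((Equiv.Perm.sign σ : ℤ) : ℚ) * (Equiv.Perm.sign σ : ℤ) = 1 := by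
        rcases Int.units_eq_one_or (Equiv.Perm.sign σ) with h | h <;> simp [h]
      linear_combination (cmpF (beta N lam) b * Kt N n L b) * this
    · intro b hb
      simp only [Function.Injective, not_forall] at hb
      obtain ⟨i, j, hij, hne⟩ := hb
      rw [Kt_eq N n L b i j hne hij, mul_zero]

end MN

namespace MN

/-- `ν` is obtained from `lam` by adding a `k`-ribbon in rows `p..q`. -/
def Rib (lam ν : ℕ → ℕ) (k p q : ℕ) : Prop :=
  p ≤ q ∧ (∀ r, r < p ∨ q < r → ν r = lam r) ∧ (∀ r, p ≤ r → r < q → ν (r + 1) = lam r + 1) ∧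
    ν p + q = lam q + k + p ∧ lam p < ν p

theorem rib_of_isRibbon {lam ν : ℕ → ℕ} {k : ℕ} (hk : 0 < k) (h : IsRibbon lam ν k) :
    ∃ p q, Rib lam ν k p q := by
  obtain ⟨hle, b, -, hmem, hsurj, hstep⟩ := h
  obtain ⟨R, C, hR, hC⟩ : ∃ R C : ℕ → ℕ, (∀ m (h : m < k), R m = (b ⟨m, h⟩).1) ∧
      (∀ m (h : m < k), C m = (b ⟨m, h⟩).2) :=
    ⟨fun m => if h : m < k then (b ⟨m, h⟩).1 else 0, fun m => if h : m < k then (b ⟨m, h⟩).2 else 0,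
      fun m h => by simp [h], fun m h => by simp [h]⟩
  have step : ∀ m, m + 1 < k → (R (m + 1) = R m ∧ C m = C (m + 1) + 1) ∨
      (C (m + 1) = C m ∧ R (m + 1) = R m + 1) := by
    intro m hm
    have := hstep ⟨m, by omega⟩ hm
    rw [hR m (by omega), hR (m+1) hm, hC m (by omega), hC (m+1) hm]
    exact this
  have mem : ∀ m < k, lam (R m) ≤ C m ∧ C m < ν (R m) := by
    intro m hm
    have := hmem ⟨m, hm⟩
    rw [hR m hm, hC m hm]
    exact this
  have surj : ∀ i j, lam i ≤ j → j < ν i → ∃ m < k, R m = i ∧ C m = j := by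
    intro i j h1 h2
    obtain ⟨m, hm⟩ := hsurj (i, j) ⟨h1, h2⟩
    refine ⟨m, m.2, ?_, ?_⟩
    · rw [hR m m.2]; simp [hm]
    · rw [hC m m.2]; simp [hm]
  clear hR hC hstep hmem hsurj
  have content : ∀ m < k, C m + R 0 + m = C 0 + R m := by
    intro m
    induction m with
    | zero => intro _; omega
    | succ m ih =>
      intro hm
      have := ih (by omega)
      rcases step m hm with h | h <;> omega
  have mono : ∀ d m, m + d < k → R m ≤ R (m + d) := by
    intro d
    induction d with
    | zero => intro m _; exact le_rfl
    | succ d ih =>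
      intro m hm
      have h1 := ih m (by omega)
      have h2 := step (m + d) (by omega)
      rw [← add_assoc]
      omega
  have inter : ∀ r, R 0 ≤ r → ∀ m < k, r < R m → ∃ m', m' + 1 < k ∧ R m' = r ∧ R (m' + 1) = r + 1 := by
    intro r hr m
    induction m with
    | zero => intro _ _; omega
    | succ m ih =>
      intro hm hrm
      by_cases h : r < R m
      · exact ih (by omega) h
      · have := step m hm
        exact ⟨m, hm, by omega, by omega⟩
  have outside : ∀ i j, lam i ≤ j → j < ν i → R 0 ≤ i ∧ i ≤ R (k - 1) := by
    intro i j h1 h2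
    obtain ⟨m, hm, rfl, -⟩ := surj i j h1 h2
    have e1 := mono m 0 (by omega)
    have e2 := mono (k - 1 - m) m (by omega)
    rw [zero_add] at e1
    rw [show m + (k - 1 - m) = k - 1 by omega] at e2
    exact ⟨e1, e2⟩
  refine ⟨R 0, R (k - 1), ?_, ?_, ?_, ?_, ?_⟩
  · have := mono (k - 1) 0 (by omega)
    rwa [zero_add] at this
  · intro r hr
    by_contra hne
    have := hle r
    have := outside r (lam r) le_rfl (by omega)
    omega
  · intro r h1 h2
    obtain ⟨m, hm, e1, e2⟩ := inter r h1 (k - 1) (by omega) h2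
    have hcol : C (m + 1) = C m := by
      have := step m hm; omega
    have m1 := mem m (by omega)
    have m2 := mem (m + 1) hm
    rw [e1] at m1
    rw [e2] at m2
    have c1 := content m (by omega)
    have c2 := content (m + 1) hm
    have A : ν (r + 1) = C m + 1 := by
      by_contra hne
      obtain ⟨m', hm', f1, f2⟩ := surj (r + 1) (C m + 1) (by omega) (by omega)
      have c3 := content m' hm'
      have : m' = m := by omega
      subst this
      omega
    have B : lam r = C m := by
      by_contra hne
      obtain ⟨m', hm', f1, f2⟩ := surj r (C m - 1) (by omega) (by omega)
      have c3 := content m' hm'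
      have : m' = m + 1 := by omega
      subst this
      omega
    omega
  · have A : ν (R 0) = C 0 + 1 := by
      by_contra hne
      have m0 := mem 0 hk
      obtain ⟨m', hm', f1, f2⟩ := surj (R 0) (C 0 + 1) (by omega) (by omega)
      have := content m' hm'
      omega
    have B : lam (R (k - 1)) = C (k - 1) := by
      by_contra hne
      have m0 := mem (k - 1) (by omega)
      have c1 := content (k - 1) (by omega)
      obtain ⟨m', hm', f1, f2⟩ := surj (R (k - 1)) (C (k - 1) - 1) (by omega) (by omega)
      have := content m' hm'
      omega
    have := content (k - 1) (by omega)
    omega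
  · have := mem 0 hk
    omega

theorem Rib.lt {lam ν : ℕ → ℕ} {k p q : ℕ} (hl : Antitone lam) (h : Rib lam ν k p q) (r : ℕ)
    (h1 : p ≤ r) (h2 : r ≤ q) : lam r < ν r := by
  obtain ⟨_, _, b, _, d⟩ := h
  by_cases hr : r = p
  · rwa [hr]
  · have := b (r - 1) (by omega) (by omega)
    rw [show r - 1 + 1 = r by omega] at this
    have := hl (show r - 1 ≤ r by omega)
    omega

theorem isRibbon_of_rib {lam ν : ℕ → ℕ} {k p q : ℕ} (hl : Antitone lam)
    (h : Rib lam ν k p q) : IsRibbon lam ν k := by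
  have hlt := fun r => h.lt hl r
  obtain ⟨hpq, hout, hin, hsz, hp⟩ := h
  have hex : ∀ m < k, ∃ r, p ≤ r ∧ lam r + p + m + 1 ≤ ν p + r := fun m hm => ⟨q, hpq, by omega⟩
  have hq : ∀ m (hm : m < k), Nat.find (hex m hm) ≤ q := fun m hm => Nat.find_min' _ ⟨hpq, by omega⟩
  obtain ⟨R, hR⟩ : ∃ R : ℕ → ℕ, ∀ m, m < k → (p ≤ R m ∧ lam (R m) + p + m + 1 ≤ ν p + R m) ∧
      R m ≤ q ∧ ∀ r, p ≤ r → lam r + p + m + 1 ≤ ν p + r → R m ≤ r := by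
    refine ⟨fun m => if hm : m < k then Nat.find (hex m hm) else 0, fun m hm => ?_⟩
    simp only [hm, dif_pos]
    exact ⟨Nat.find_spec (hex m hm), hq m hm, fun r h1 h2 => Nat.find_min' (hex m hm) ⟨h1, h2⟩⟩
  refine ⟨?_, fun m => (R m, ν p + R m - p - 1 - m), ?_, ?_, ?_, ?_⟩
  · intro r
    by_cases hr : r < p ∨ q < r
    · exact (hout r hr).ge
    · exact (hlt r (by omega) (by omega)).le
  · intro m m' hmm
    simp only [Prod.mk.injEq] at hmm
    obtain ⟨e1, e2⟩ := hmm
    have s1 := (hR m m.2).1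
    have s2 := (hR m' m'.2).1
    rw [e1] at e2 s1
    ext
    omega
  · intro m
    obtain ⟨s1, s2, s3⟩ := hR m m.2
    change lam (R m) ≤ ν p + R m - p - 1 - m ∧ ν p + R m - p - 1 - m < ν (R m)
    generalize R m = r at *
    refine ⟨by omega, ?_⟩
    by_cases hr : r = p
    · subst hr; omega
    · have e1 := hin (r - 1) (by omega) (by omega)
      rw [show r - 1 + 1 = r by omega] at e1
      have e2 := s3 (r - 1) (by omega)
      omega
  · rintro ⟨i, j⟩ ⟨h1, h2⟩
    simp only at h1 h2
    have hi : p ≤ i ∧ i ≤ q := by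
      by_contra hc
      have := hout i (by omega)
      omega
    have hj1 : j + p + 1 ≤ ν p + i := by
      by_cases hip : i = p
      · subst hip; omega
      · have e1 := hin (i - 1) (by omega) (by omega)
        rw [show i - 1 + 1 = i by omega] at e1
        have := hl (show p ≤ i - 1 by omega)
        omega
    have hlq : lam q + i ≤ j + q := by
      have := hl hi.2
      omega
    have hm : ν p + i - p - 1 - j < k := by omega
    have hfind : R (ν p + i - p - 1 - j) = i := by
      obtain ⟨s1, s2, s3⟩ := hR _ hm
      apply le_antisymm (s3 i hi.1 (by omega))
      by_contra hc
      have e1 := hin (i - 1) (by omega) (by omega)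
      rw [show i - 1 + 1 = i by omega] at e1
      have := hl (show R (ν p + i - p - 1 - j) ≤ i - 1 by omega)
      omega
    refine ⟨⟨_, hm⟩, ?_⟩
    simp only [hfind, Prod.mk.injEq, true_and]
    omega
  · intro m hm
    obtain ⟨s1, s2, s3⟩ := hR m m.2
    obtain ⟨t1, t2, t3⟩ := hR (m + 1) hm
    change (R (m + 1) = R m ∧ ν p + R m - p - 1 - m = ν p + R (m + 1) - p - 1 - (m + 1) + 1) ∨
      (ν p + R (m + 1) - p - 1 - (m + 1) = ν p + R m - p - 1 - m ∧ R (m + 1) = R m + 1)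
    have hRR : R m ≤ R (m + 1) := s3 _ t1.1 (by omega)
    generalize R (m + 1) = r' at *
    generalize R m = r at *
    by_cases hr : lam r + p + (m + 1) + 1 ≤ ν p + r
    · have := t3 r s1.1 hr
      left
      omega
    · right
      have e := hl (show r ≤ r + 1 by omega)
      have := t3 (r + 1) (by omega) (by omega)
      have : r ≠ r' := by rintro rfl; omega
      omega

theorem Rib.card {lam ν : ℕ → ℕ} {k p q : ℕ} (hl : Antitone lam) (h : Rib lam ν k p q) :
    Nat.card {i : ℕ // lam i < ν i} = q - p + 1 := by
  have : Nat.card {i : ℕ // lam i < ν i} = (Finset.Icc p q).card := by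
    apply Nat.subtype_card
    intro r
    rw [Finset.mem_Icc]
    constructor
    · intro hr; exact h.lt hl r hr.1 hr.2
    · intro hr
      by_contra hc
      have := h.2.1 r (by omega)
      omega
  rw [this, Nat.card_Icc]
  have := h.1
  omega

theorem Rib.q_unique {lam ν : ℕ → ℕ} {k p q p' q' : ℕ} (hl : Antitone lam) (h : Rib lam ν k p q)
    (h' : Rib lam ν k p' q') : q = q' := by
  have a := h.lt hl q h.1 le_rfl
  have b := h'.lt hl q' h'.1 le_rfl
  by_contra hne
  rcases Nat.lt_or_gt_of_ne hne with hlt | hlt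
  · have := h.2.1 q' (by omega); omega
  · have := h'.2.1 q (by omega); omega

theorem Rib.p_le {lam ν ν' : ℕ → ℕ} {k p q p' : ℕ} (hl : Antitone lam)
    (hν' : ∀ i, ν' (i + 1) ≤ ν' i) (h : Rib lam ν k p q) (h' : Rib lam ν' k p' q) : p' ≤ p := by
  by_contra hc
  have e1 := h'.2.1 (p' - 1) (by omega)
  have e2 := hν' (p' - 1)
  rw [show p' - 1 + 1 = p' by omega] at e2
  have e3 := hl (show p ≤ p' - 1 by omega)
  have := h.2.2.2
  have := h'.2.2.2
  omega

theorem Rib.unique {lam ν ν' : ℕ → ℕ} {k p q p' : ℕ} (hl : Antitone lam)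
    (hν : ∀ i, ν (i + 1) ≤ ν i)
    (hν' : ∀ i, ν' (i + 1) ≤ ν' i) (h : Rib lam ν k p q) (h' : Rib lam ν' k p' q) : ν = ν' := by
  have e : p = p' := le_antisymm (h'.p_le hl hν h) (h.p_le hl hν' h')
  subst e
  ext r
  by_cases hr : r < p ∨ q < r
  · rw [h.2.1 r hr, h'.2.1 r hr]
  · by_cases hrp : r = p
    · subst hrp
      have := h.2.2.2
      have := h'.2.2.2
      omega
    · have e1 := h.2.2.1 (r - 1) (by omega) (by omega)
      have e2 := h'.2.2.1 (r - 1) (by omega) (by omega)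
      rw [show r - 1 + 1 = r by omega] at e1 e2
      omega

theorem Rib.bound {lam ν : ℕ → ℕ} {k p q N : ℕ} (hl : Antitone lam) (hN : lam N = 0)
    (hν : ∀ i, ν (i + 1) ≤ ν i) (h : Rib lam ν k p q) : q < N + k := by
  by_contra hc
  have z : ∀ i, N ≤ i → lam i = 0 := by
    intro i hi
    have := hl hi
    omega
  have e0 := z q (by omega)
  have := h.2.2.2
  have e1 := h.2.1 (p - 1) (by omega)
  have e2 := hν (p - 1)
  rw [show p - 1 + 1 = p by omega] at e2
  have := z (p - 1) (by omega)
  omega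

theorem exists_rib {N : ℕ} {lam : ℕ → ℕ} {k : ℕ} (hk : 0 < k) (hl : Antitone lam) (i : Fin N)
    (hi : ∀ j, beta N lam j ≠ beta N lam i + k) :
    ∃ ν p, (∀ r, ν (r + 1) ≤ ν r) ∧ Rib lam ν k p i := by
  have hex : ∃ p, lam p + i < lam i + k + p := ⟨i, by omega⟩
  obtain ⟨p, hp⟩ : ∃ p, p = Nat.find hex := ⟨_, rfl⟩
  have s1 := Nat.find_spec hex
  have s2 : Nat.find hex ≤ i := Nat.find_min' hex (by omega)
  have s3 := fun r => Nat.find_min (m := r) hex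
  rw [← hp] at s1 s2 s3
  clear hp
  have hiN := i.2
  have key : 0 < p → lam i + k + p ≤ lam (p - 1) + i := by
    intro hp0
    have h1 := s3 (p - 1) (by omega)
    have h2 := hi ⟨p - 1, by omega⟩
    simp only [beta] at h2
    omega
  refine ⟨fun r => if r = p then lam i + k + p - i else if p < r ∧ r ≤ i then lam (r - 1) + 1 else lam r,
    p, ?_, s2, ?_, ?_, ?_, ?_⟩
  · intro r
    have l1 := hl (show r ≤ r + 1 by omega)
    have l2 := hl (show r - 1 ≤ r by omega)
    simp only
    by_cases c1 : r + 1 = p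
    · have := key (by omega)
      rw [show p - 1 = r by omega] at this
      rw [if_pos c1, if_neg (by omega), if_neg (by omega)]
      omega
    · by_cases c2 : r = p
      · subst c2
        rw [if_neg c1, if_pos rfl]
        simp only [Nat.add_sub_cancel]
        split_ifs <;> omega
      · rw [if_neg c1, if_neg c2]
        simp only [Nat.add_sub_cancel]
        split_ifs <;> omega
  · intro r hr
    simp only
    rw [if_neg (by omega), if_neg (by omega)]
  · intro r h1 h2
    simp only
    rw [if_neg (by omega), if_pos (by omega)]
    simp
  · simp only [if_true]
    omega
  · simp only [if_true]
    omega

theorem Rib.beta_eq {N : ℕ} {lam ν : ℕ → ℕ} {k : ℕ} {p q : Fin N} (h : Rib lam ν k p q) :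
    beta N lam + Pi.single q k = beta N ν ∘ Fin.cycleIcc p q := by
  haveI : NeZero N := ⟨by have := p.2; omega⟩
  obtain ⟨hpq, hout, hin, hsz, hp⟩ := h
  ext r
  have hq := q.2
  simp only [Pi.add_apply, Function.comp_apply]
  by_cases h1 : r < p
  · have : r ≠ q := by
      intro e; rw [e, Fin.lt_def] at h1; omega
    rw [Fin.cycleIcc_of_lt h1]
    simp [this, beta, hout r (Or.inl h1)]
  · by_cases h2 : q < r
    · have : r ≠ q := ne_of_gt h2
      rw [Fin.cycleIcc_of_gt h2]
      simp [this, beta, hout r (Or.inr h2)]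
    · by_cases h3 : r = q
      · subst h3
        rw [Fin.cycleIcc_of_last hpq]
        simp [beta]
        omega
      · have h1' : p ≤ r := not_lt.1 h1
        have h2' : r < q := lt_of_le_of_ne (not_lt.1 h2) h3
        rw [Fin.cycleIcc_of_ge_of_lt h1' h2']
        have e : ((r + 1 : Fin N) : ℕ) = r + 1 := Fin.val_add_one_of_lt' (by
          have : (r : ℕ) < q := h2'
          omega)
        have e2 := hin r h1' h2'
        have : (r : ℕ) < q := h2'
        simp [h3, beta, e, e2]
        omega

abbrev RibT (lam : ℕ → ℕ) (k : ℕ) : Type :=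
  {ν : ℕ → ℕ // (∀ i, ν (i + 1) ≤ ν i) ∧ IsRibbon lam ν k}

theorem ribT_finite {lam : ℕ → ℕ} {k : ℕ} (hk : 0 < k) (hl : Antitone lam) (hfin : ∃ N, lam N = 0) :
    Finite (RibT lam k) := by
  obtain ⟨N, hN⟩ := hfin
  choose p q hpq using fun ν : RibT lam k => rib_of_isRibbon hk ν.2.2
  apply Finite.of_injective (fun ν : RibT lam k => (⟨q ν, (hpq ν).bound hl hN ν.2.1⟩ : Fin (N + k)))
  intro ν ν' h
  have h : q ν = q ν' := congrArg Fin.val h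
  have h1 := hpq ν
  rw [h] at h1
  exact Subtype.ext (h1.unique hl ν.2.1 ν'.2.1 (hpq ν'))

theorem ribbon_sum {N N0 : ℕ} {lam : ℕ → ℕ} {k : ℕ} (hk : 0 < k) (hl : Antitone lam)
    (h0 : lam N0 = 0) (hN : N0 + k ≤ N) [Fintype (RibT lam k)] (f : (Fin N → ℕ) → ℚ)
    (hperm : ∀ a (σ : Equiv.Perm (Fin N)), f (a ∘ σ) = (Equiv.Perm.sign σ : ℤ) * f a)
    (heq : ∀ a (i j : Fin N), i ≠ j → a i = a j → f a = 0) :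
    ∑ ν : RibT lam k, (-1 : ℚ) ^ (Nat.card {i : ℕ // lam i < ν.1 i} - 1) * f (beta N ν.1)
      = ∑ i, f (beta N lam + Pi.single i k) := by
  choose p q hpq using fun ν : RibT lam k => rib_of_isRibbon hk ν.2.2
  have hqN : ∀ ν, q ν < N := fun ν => lt_of_lt_of_le ((hpq ν).bound hl h0 ν.2.1) hN
  have hpN : ∀ ν, p ν < N := fun ν => lt_of_le_of_lt (hpq ν).1 (hqN ν)
  apply Finset.sum_of_injOn (fun ν => (⟨q ν, hqN ν⟩ : Fin N))
  · intro ν _ ν' _ h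
    have h : q ν = q ν' := congrArg Fin.val h
    have h1 := hpq ν
    rw [h] at h1
    exact Subtype.ext (h1.unique hl ν.2.1 ν'.2.1 (hpq ν'))
  · intro ν _; simp
  · intro i _ hi
    by_cases hex : ∃ j, beta N lam j = beta N lam i + k
    · obtain ⟨j, hj⟩ := hex
      have hne : j ≠ i := by rintro rfl; omega
      apply heq _ i j hne.symm
      simp [hne, hj]
    · push Not at hex
      exfalso
      apply hi
      obtain ⟨ν, p', h1, h2⟩ := exists_rib hk hl i hex
      refine ⟨⟨ν, h1, isRibbon_of_rib hl h2⟩, by simp, ?_⟩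
      ext
      exact (hpq ⟨ν, h1, isRibbon_of_rib hl h2⟩).q_unique hl h2
  · intro ν _
    have h := hpq ν
    have hb := Rib.beta_eq (p := ⟨p ν, hpN ν⟩) (q := ⟨q ν, hqN ν⟩) h
    rw [h.card hl]
    rw [hb, hperm, Fin.sign_cycleIcc_of_le (show (⟨p ν, hpN ν⟩ : Fin N) ≤ ⟨q ν, hqN ν⟩ from h.1)]
    simp

end MN

namespace MN

theorem coeff_left {lam : ℕ → ℕ} {k n : ℕ} (hk : 0 < k) (L : ℕ →₀ ℕ) (hL : ∀ v, n ≤ v → L v = 0) :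
    MvPowerSeries.coeff L (schurS lam * pS k)
      = ∑ j ∈ Finset.range n, if k ≤ L j then (Nat.card (Kset lam (⇑L - Pi.single j k)) : ℚ) else 0 := by
  rw [MvPowerSeries.coeff_mul, ← Finset.sum_filter]
  symm
  apply Finset.sum_of_injOn (fun j => (L - Finsupp.single j k, Finsupp.single j k))
  · intro i _ j _ h
    have h := (Prod.mk.inj h).2
    exact ((Finsupp.single_eq_single_iff _ _ _ _).1 h).elim (fun h => h.1) (fun h => by omega)
  · intro j hj
    simp only [Finset.coe_filter, Finset.mem_range, Set.mem_ofPred_eq] at hj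
    simp only [Finset.mem_coe, Finset.HasAntidiagonal.mem_antidiagonal]
    apply tsub_add_cancel_of_le
    rw [Finsupp.single_le_iff]
    exact hj.2
  · rintro ⟨x, y⟩ hxy hn
    rw [Finset.HasAntidiagonal.mem_antidiagonal] at hxy
    simp only at hxy
    have : MvPowerSeries.coeff y (pS k) = 0 := by
      change (if ∃ j, y = Finsupp.single j k then (1 : ℚ) else 0) = 0
      rw [if_neg]
      rintro ⟨j, rfl⟩
      apply hn
      have hj : k ≤ L j := by rw [← hxy]; simp
      refine ⟨j, ?_, ?_⟩
      · simp only [Finset.coe_filter, Finset.mem_range, Set.mem_ofPred_eq]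
        refine ⟨?_, hj⟩
        by_contra hc
        have := hL j (by omega)
        omega
      · simp only [Prod.mk.injEq, and_true]
        rw [← hxy]; simp
    rw [this, mul_zero]
  · intro j hj
    have : MvPowerSeries.coeff (Finsupp.single j k) (pS k) = 1 := by
      change (if ∃ i, Finsupp.single j k = Finsupp.single i k then (1 : ℚ) else 0) = 1
      rw [if_pos ⟨j, rfl⟩]
    simp only
    rw [this, mul_one]
    change _ = (Nat.card (Kset lam ⇑(L - Finsupp.single j k)) : ℚ)
    rw [Finsupp.coe_tsub, Finsupp.single_eq_pi_single]

end MN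

/-- Murnaghan–Nakayama rule: for a partition `λ` and `k ≥ 1`,
`s_λ · p_k = Σ_ν sgn(ν/λ) s_ν`, summed over partitions `ν ⊇ λ` with `ν/λ` a
`k`-ribbon, where `sgn(ν/λ) = (−1)^{r−1}` and `r` is the number of rows occupied
by the ribbon. -/
theorem murnaghan_nakayama (lam : ℕ → ℕ)
    (hpart : ∀ i, lam (i + 1) ≤ lam i) (hfin : ∃ N, lam N = 0)
    (k : ℕ) (hk : 0 < k) :
    schurS lam * pS k
      = ∑ᶠ ν : {ν : ℕ → ℕ // (∀ i, ν (i + 1) ≤ ν i) ∧ IsRibbon lam ν k},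
          ((-1 : ℚ) ^ (Nat.card {i : ℕ // lam i < ν.1 i} - 1)) • schurS ν.1 := by
  have hl : Antitone lam := antitone_nat_of_succ_le hpart
  haveI := MN.ribT_finite hk hl hfin
  haveI : Fintype (MN.RibT lam k) := Fintype.ofFinite _
  rw [finsum_eq_sum_of_fintype]
  obtain ⟨N0, h0⟩ := hfin
  ext L
  obtain ⟨n, hn⟩ : ∃ n, ∀ v, n ≤ v → L v = 0 := by
    refine ⟨L.support.sup id + 1, ?_⟩
    intro v hv
    by_contra hc
    have := Finset.le_sup (f := id) (Finsupp.mem_support_iff.2 hc)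
    simp only [id] at this
    omega
  obtain ⟨N, hN⟩ : ∃ N, N = N0 + k + ∑ v ∈ Finset.range n, L v + 1 := ⟨_, rfl⟩
  have z : ∀ i, N0 ≤ i → lam i = 0 := fun i hi => by have := hl hi; omega
  have hlam : MN.IsPart N lam := ⟨hpart, fun i hi => z i (by omega)⟩
  rw [MN.coeff_left hk L hn, map_sum]
  have hR : ∀ ν : MN.RibT lam k, MvPowerSeries.coeff L
      (((-1 : ℚ) ^ (Nat.card {i : ℕ // lam i < ν.1 i} - 1)) • schurS ν.1)
      = (-1 : ℚ) ^ (Nat.card {i : ℕ // lam i < ν.1 i} - 1) * MN.Kt N n L (MN.beta N ν.1) := by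
    intro ν
    obtain ⟨p, q, hpq⟩ := MN.rib_of_isRibbon hk ν.2.2
    have hq := hpq.bound hl h0 ν.2.1
    rw [MN.Kt_eq_K n ν.1 L ⟨ν.2.1, fun i hi => by
      rw [hpq.2.1 i (by omega)]; exact z i (by omega)⟩ hn]
    rfl
  rw [Finset.sum_congr rfl (fun ν _ => hR ν),
    MN.ribbon_sum hk hl h0 (by omega) (MN.Kt N n L) (MN.Kt_perm N n L) (MN.Kt_eq N n L),
    MN.Kt_main N k hk n L _ (by omega)]
  apply Finset.sum_congr rfl
  intro j _
  split_ifs with hj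
  · rw [MN.Kt_eq_K n lam _ hlam]
    intro v hv
    simp [hn v hv]
  · rfl
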